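/- Let W be a cyclically reduced nonperiodic word in a bi-ordered free group (F, ≺). Then the maximal ascent A of W is uniquely positioned: A is a prefix of exactly one element of the set of cyclic permutations of W and W⁻¹. -/

import Mathlib

variable {X : Type*}

/-- A word over `X ∪ X⁻¹` (a letter is a generator with a sign) is reduced if no
letter is immediately followed by its inverse. -/
def Reduced (w : List (X × Bool)) : Prop :=
  w.Chain' fun a b => a.1 = b.1 → a.2 = b.2

/-- A word is cyclically reduced if it is reduced and its first letter is not the
inverse of its last letter. -/
def CyclicallyReduced (w : List (X × Bool)) : Prop :=
  Reduced w ∧ ∀ a ∈ w.head?, ∀ b ∈ w.getLast?, (a.1 = b.1 → a.2 = b.2)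

/-- A word is periodic if it is a concatenation of `k > 1` copies of some word. -/
def Periodic (w : List (X × Bool)) : Prop :=
  ∃ (U : List (X × Bool)) (k : ℕ), 1 < k ∧ w = (List.replicate k U).flatten

section Order
variable [LinearOrder (FreeGroup X)]

/-- A word is an ascent (w.r.t. an order on the free group) if it is nonempty and
every nonempty prefix and every nonempty suffix represents an element `≻ 1`. -/
def IsAscent (w : List (X × Bool)) : Prop :=
  w ≠ [] ∧ (∀ i, 0 < i → i ≤ w.length → 1 < FreeGroup.mk (w.take i)) ∧
    (∀ i, i < w.length → 1 < FreeGroup.mk (w.drop i))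

/-- A word is a descent if it is nonempty and every nonempty prefix and every
nonempty suffix represents an element `≺ 1`. -/
def IsDescent (w : List (X × Bool)) : Prop :=
  w ≠ [] ∧ (∀ i, 0 < i → i ≤ w.length → FreeGroup.mk (w.take i) < 1) ∧
    (∀ i, i < w.length → FreeGroup.mk (w.drop i) < 1)

/-- `B` occurs as a subword of some cyclic permutation of `W` or of `W⁻¹`. -/
def InRW (W B : List (X × Bool)) : Prop :=
  ∃ W', (List.IsRotated W W' ∨ List.IsRotated (FreeGroup.invRev W) W') ∧ B <:+: W'

/-- `A` is the maximal ascent of `W`: an ascent occurring as a subword of a cyclic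
permutation of `W` or `W⁻¹`, and `⪰` every such ascent. -/
def IsMaxAscent (W A : List (X × Bool)) : Prop :=
  IsAscent A ∧ InRW W A ∧
    ∀ B, IsAscent B → InRW W B → FreeGroup.mk B ≤ FreeGroup.mk A

end Order

/-!
By maximality, `mk B ≤ mk A` for every word `B` read along the cyclic word `W` or its inverse: a
word above `1` that is not an ascent contains a shorter word at least as large, obtained by removing
a prefix or suffix `≤ 1`. Hence a word read directly before or after an occurrence of `A` is `≤ 1`.

* If `A` and `A⁻¹` both occur in the cyclic word, they cannot overlap, because a nonempty overlap
  and its inverse would both be `> 1`. A word `E` with `A E A⁻¹` in the cyclic word satisfies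
  `E ≤ 1` and `E⁻¹ ≤ 1`, hence `A E A⁻¹ = 1`, and `W` would not be cyclically reduced.
* Two occurrences of `A` cannot be disjoint, as `A E A` forces `A E = 1` in the same way. They
  cannot overlap at one end only, since then a nonempty prefix of `A` would be `≤ 1`. If they
  overlap at both ends, then `A = Q' C' Q = Q C Q'`, where `C` and `C'` follow the two occurrences
  around the cyclic word. Nonempty suffixes of `Q` and `Q'` are `> 1`, while prefixes of `C` and
  `C'` are `≤ 1`, and a Euclidean descent on the lengths of `Q` and `Q'` gives `C = C'`: the two
  cyclic permutations `A C` and `A C'` are the same word.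
-/

section Lists
variable {α : Type*}

theorem exists_append_of_isRotated {l m : List α} (h : l ~r m) :
    ∃ S T, l = S ++ T ∧ m = T ++ S := by
  obtain ⟨n, hn, rfl⟩ := List.isRotated_iff_mod.1 h
  exact ⟨l.take n, l.drop n, by simp, List.rotate_eq_drop_append_take hn⟩

theorem exists_isRotated_prefix_of_infix {l m : List α} (h : l <:+: m) :
    ∃ m', m ~r m' ∧ l <+: m' := by
  obtain ⟨s, t, rfl⟩ := h
  refine ⟨l ++ (t ++ s), ?_, List.prefix_append _ _⟩
  rw [List.append_assoc, ← List.append_assoc l t s]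
  exact List.isRotated_append

theorem middle_eq_of_append_swap {Q Q' C C' : List α} (h : Q' ++ C' ++ Q = Q ++ C ++ Q')
    (hQ : ∀ V, V <:+ Q → V <+: C' → V = []) (hQ' : ∀ V, V <:+ Q' → V <+: C → V = []) :
    C' = C := by
  induction hn : Q.length + Q'.length using Nat.strong_induction_on generalizing Q Q' C C' with
  | _ n ih =>
  wlog hle : Q'.length ≤ Q.length generalizing Q Q' C C'
  · exact (this h.symm hQ' hQ (by omega) (by omega)).symm
  have hlen : C'.length = C.length := by
    have := congrArg List.length h
    simp only [List.length_append] at this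
    omega
  rcases eq_or_ne C' [] with hC' | hC'
  · rw [hC', eq_comm, ← List.length_eq_zero_iff, ← hlen, hC', List.length_nil]
  have hpre : Q' <+: Q ++ C ++ Q' := ⟨C' ++ Q, by rw [← h, List.append_assoc]⟩
  obtain ⟨V, rfl⟩ : Q' <+: Q :=
    List.prefix_of_prefix_length_le hpre ⟨C ++ Q', by rw [List.append_assoc]⟩ hle
  have hV : C' ++ (Q' ++ V) = V ++ (C ++ Q') := by simpa using h
  rcases List.append_eq_append_iff.1 hV with ⟨S, rfl, hS⟩ | ⟨S, rfl, -⟩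
  · refine ih (S.length + Q'.length) ?_ ?_ (fun U hU => hQ U ?_) hQ' rfl
    · have := List.length_pos_iff.2 hC'
      simp only [List.length_append] at hn
      omega
    · simpa using hS
    · exact hU.trans ⟨Q' ++ C', by simp⟩
  · obtain rfl : V = [] := hQ V (List.suffix_append _ _) (List.prefix_append _ _)
    simpa using h

end Lists

section Words
variable {W B C U V l m : List (X × Bool)}

theorem isRotated_invRev (h : l ~r m) : FreeGroup.invRev l ~r FreeGroup.invRev m :=
  (h.map _).reverse

theorem isRotated_or_isRotated_invRev
    (hU : W ~r U ∨ FreeGroup.invRev W ~r U) (hV : W ~r V ∨ FreeGroup.invRev W ~r V) :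
    U ~r V ∨ U ~r FreeGroup.invRev V := by
  rcases hU with hU | hU <;> rcases hV with hV | hV
  · exact .inl (hU.symm.trans hV)
  · exact .inr (hU.symm.trans (by simpa using isRotated_invRev hV))
  · exact .inr (hU.symm.trans (isRotated_invRev hV))
  · exact .inl (hU.symm.trans hV)

theorem invRev_infix (h : l <:+: m) : FreeGroup.invRev l <:+: FreeGroup.invRev m :=
  List.reverse_infix.2 (h.map _)

theorem invRev_suffix_of_prefix (h : l <+: m) : FreeGroup.invRev l <:+ FreeGroup.invRev m :=
  List.reverse_suffix.2 (h.map _)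

theorem invRev_prefix_of_suffix (h : l <:+ m) : FreeGroup.invRev l <+: FreeGroup.invRev m :=
  List.reverse_prefix.2 (h.map _)

theorem isReduced_invRev_iff :
    FreeGroup.IsReduced (FreeGroup.invRev l) ↔ FreeGroup.IsReduced l := by
  classical
  rw [FreeGroup.isReduced_iff_reduce_eq, FreeGroup.isReduced_iff_reduce_eq,
    FreeGroup.reduce_invRev, FreeGroup.invRev_injective.eq_iff]

theorem eq_nil_of_isReduced_of_mk_eq_one (hl : FreeGroup.IsReduced l) (h : FreeGroup.mk l = 1) :
    l = [] := by
  classical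
  rw [← hl.reduce_eq, ← FreeGroup.toWord_mk, h, FreeGroup.toWord_one]

theorem CyclicallyReduced.isReduced_of_isRotated (hW : CyclicallyReduced W) (h : W ~r m) :
    FreeGroup.IsReduced m := by
  have hcyc : FreeGroup.IsCyclicallyReduced W :=
    ⟨hW.1, fun a ha b hb hab => (hW.2 b hb a ha hab.symm).symm⟩
  obtain ⟨S, T, rfl, rfl⟩ := exists_append_of_isRotated h
  exact (hcyc.flatten_replicate 2).isReduced.infix ⟨S, T, by simp [List.replicate_succ]⟩

theorem InRW.of_infix (hB : InRW W B) (h : C <:+: B) : InRW W C := by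
  obtain ⟨W', hW', hBW'⟩ := hB
  exact ⟨W', hW', h.trans hBW'⟩

theorem InRW.invRev (hB : InRW W B) : InRW W (FreeGroup.invRev B) := by
  obtain ⟨W', hW' | hW', hBW'⟩ := hB
  · exact ⟨_, .inr (isRotated_invRev hW'), invRev_infix hBW'⟩
  · exact ⟨_, .inl (by simpa using isRotated_invRev hW'), invRev_infix hBW'⟩

theorem InRW.isReduced (hB : InRW W B) (hW : CyclicallyReduced W) : FreeGroup.IsReduced B := by
  obtain ⟨W', hW' | hW', hBW'⟩ := hB
  · exact (hW.isReduced_of_isRotated hW').infix hBW'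
  · have hrot : W ~r FreeGroup.invRev W' := by simpa using isRotated_invRev hW'
    exact (isReduced_invRev_iff.1 (hW.isReduced_of_isRotated hrot)).infix hBW'

theorem InRW.eq_nil_of_mk_eq_one (hB : InRW W B) (hW : CyclicallyReduced W)
    (h : FreeGroup.mk B = 1) : B = [] :=
  eq_nil_of_isReduced_of_mk_eq_one (hB.isReduced hW) h

end Words

section Ascents
variable [LinearOrder (FreeGroup X)] {A B P Y : List (X × Bool)}

theorem IsAscent.one_lt_of_prefix (hA : IsAscent A) (h : P <+: A) (hP : P ≠ []) :
    1 < FreeGroup.mk P := by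
  rw [List.prefix_iff_eq_take.1 h]
  exact hA.2.1 _ (List.length_pos_iff.2 hP) h.length_le

theorem IsAscent.one_lt_of_suffix (hA : IsAscent A) (h : P <:+ A) (hP : P ≠ []) :
    1 < FreeGroup.mk P := by
  have := List.length_pos_iff.2 hP
  have := h.length_le
  rw [List.suffix_iff_eq_drop.1 h]
  exact hA.2.2 _ (by omega)

theorem IsAscent.one_lt (hA : IsAscent A) : 1 < FreeGroup.mk A :=
  hA.one_lt_of_prefix List.prefix_rfl hA.1

theorem exists_append_of_not_isAscent (hB : B ≠ []) (h : ¬ IsAscent B) :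
    ∃ P Q, B = P ++ Q ∧
      (P ≠ [] ∧ FreeGroup.mk P ≤ 1 ∨ Q ≠ [] ∧ FreeGroup.mk Q ≤ 1) := by
  by_contra! hPQ
  refine h ⟨hB, fun i hi hiB => ?_, fun i hi => ?_⟩
  · refine (hPQ _ _ (List.take_append_drop i B).symm).1 (List.length_pos_iff.1 ?_)
    simp only [List.length_take]
    omega
  · refine (hPQ _ _ (List.take_append_drop i B).symm).2 (List.length_pos_iff.1 ?_)
    simp only [List.length_drop]
    omega

section LeftOrder
variable [MulLeftMono (FreeGroup X)]

theorem not_one_lt_mk_invRev (h : 1 < FreeGroup.mk Y) :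
    ¬ 1 < FreeGroup.mk (FreeGroup.invRev Y) := by
  rw [← FreeGroup.inv_mk, Left.one_lt_inv_iff]
  exact h.not_gt

theorem IsAscent.eq_nil_of_prefix_of_suffix_invRev (hA : IsAscent A) (hpre : Y <+: A)
    (hsuf : Y <:+ FreeGroup.invRev A) : Y = [] := by
  by_contra hY
  have hinv : FreeGroup.invRev Y <+: A := by simpa using invRev_prefix_of_suffix hsuf
  exact not_one_lt_mk_invRev (hA.one_lt_of_prefix hpre hY)
    (hA.one_lt_of_prefix hinv (by simpa [FreeGroup.invRev] using hY))

theorem IsAscent.eq_nil_of_suffix_of_prefix_invRev (hA : IsAscent A) (hsuf : Y <:+ A)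
    (hpre : Y <+: FreeGroup.invRev A) : Y = [] := by
  by_contra hY
  have hinv : FreeGroup.invRev Y <:+ A := by simpa using invRev_suffix_of_prefix hpre
  exact not_one_lt_mk_invRev (hA.one_lt_of_suffix hsuf hY)
    (hA.one_lt_of_suffix hinv (by simpa [FreeGroup.invRev] using hY))

end LeftOrder

section BiOrder
variable [MulLeftMono (FreeGroup X)] [MulRightMono (FreeGroup X)]

theorem exists_isAscent_infix_mk_le (h : 1 < FreeGroup.mk B) :
    ∃ C, IsAscent C ∧ C <:+: B ∧ FreeGroup.mk B ≤ FreeGroup.mk C := by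
  induction hn : B.length using Nat.strong_induction_on generalizing B with
  | _ n ih =>
  by_cases hB : IsAscent B
  · exact ⟨B, hB, List.infix_rfl, le_rfl⟩
  have hBne : B ≠ [] := by
    rintro rfl
    exact h.ne rfl
  have of_infix {Q : List (X × Bool)} (hQB : Q <:+: B) (hlen : Q.length < B.length)
      (hle : FreeGroup.mk B ≤ FreeGroup.mk Q) :
      ∃ C, IsAscent C ∧ C <:+: B ∧ FreeGroup.mk B ≤ FreeGroup.mk C := by
    obtain ⟨C, hC, hCQ, hQC⟩ := ih _ (hn ▸ hlen) (h.trans_le hle) rfl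
    exact ⟨C, hC, hCQ.trans hQB, hle.trans hQC⟩
  obtain ⟨P, Q, rfl, ⟨hP, hle⟩ | ⟨hQ, hle⟩⟩ := exists_append_of_not_isAscent hBne hB
  · refine of_infix List.infix_append_right ?_ ?_
    · simpa using List.length_pos_iff.2 hP
    · simpa [← FreeGroup.mul_mk] using hle
  · refine of_infix List.infix_append_left ?_ ?_
    · simpa using List.length_pos_iff.2 hQ
    · simpa [← FreeGroup.mul_mk] using hle

end BiOrder

end Ascents

section MaximalAscent
variable [LinearOrder (FreeGroup X)] [MulLeftMono (FreeGroup X)] [MulRightMono (FreeGroup X)]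
  {W A B C E P S T U V : List (X × Bool)}

namespace IsMaxAscent

theorem mk_le (hA : IsMaxAscent W A) (hB : InRW W B) : FreeGroup.mk B ≤ FreeGroup.mk A := by
  rcases le_or_gt (FreeGroup.mk B) 1 with h | h
  · exact h.trans hA.1.one_lt.le
  · obtain ⟨C, hC, hCB, hBC⟩ := exists_isAscent_infix_mk_le h
    exact hBC.trans (hA.2.2 C hC (hB.of_infix hCB))

theorem mk_le_one_of_append_left (hA : IsMaxAscent W A) (h : InRW W (A ++ P)) :
    FreeGroup.mk P ≤ 1 := by
  simpa [← FreeGroup.mul_mk] using hA.mk_le h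

theorem mk_le_one_of_append_right (hA : IsMaxAscent W A) (h : InRW W (P ++ A)) :
    FreeGroup.mk P ≤ 1 := by
  simpa [← FreeGroup.mul_mk] using hA.mk_le h

theorem not_inRW_append_append_self (hA : IsMaxAscent W A) (hW : CyclicallyReduced W) :
    ¬ InRW W (A ++ E ++ A) := by
  intro h
  have hAE : InRW W (A ++ E) := h.of_infix List.infix_append_left
  have hinv : FreeGroup.mk (FreeGroup.invRev E) ≤ FreeGroup.mk A :=
    hA.mk_le (hAE.of_infix List.infix_append_right).invRev
  have hge : 1 ≤ FreeGroup.mk (A ++ E) := by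
    rwa [← FreeGroup.mul_mk, ← inv_le_iff_one_le_mul, FreeGroup.inv_mk]
  have hnil := hAE.eq_nil_of_mk_eq_one hW ((hA.mk_le_one_of_append_right h).antisymm hge)
  exact hA.1.1 (List.append_eq_nil_iff.1 hnil).1

theorem not_inRW_append_append_invRev (hA : IsMaxAscent W A) (hW : CyclicallyReduced W) :
    ¬ InRW W (A ++ E ++ FreeGroup.invRev A) := by
  intro h
  have hE : FreeGroup.mk E ≤ 1 := hA.mk_le_one_of_append_left (h.of_infix List.infix_append_left)
  have hEinv : FreeGroup.mk (FreeGroup.invRev E) ≤ 1 := by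
    have hinv := h.invRev
    simp only [FreeGroup.invRev_append, FreeGroup.invRev_invRev, ← List.append_assoc] at hinv
    exact hA.mk_le_one_of_append_left (hinv.of_infix List.infix_append_left)
  have hE1 : FreeGroup.mk E = 1 :=
    hE.antisymm (by rwa [← FreeGroup.inv_mk, Left.inv_le_one_iff] at hEinv)
  have hnil := h.eq_nil_of_mk_eq_one hW (by simp [← FreeGroup.mul_mk, ← FreeGroup.inv_mk, hE1])
  exact hA.1.1 (List.append_eq_nil_iff.1 (List.append_eq_nil_iff.1 hnil).1).1

theorem eq_nil_of_prefix_append_self (hA : IsMaxAscent W A) (hW : CyclicallyReduced W)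
    (hSA : InRW W (S ++ A)) (hpre : A <+: S ++ A) : S = [] := by
  rcases List.prefix_or_prefix_of_prefix hpre (List.prefix_append S A) with ⟨E, rfl⟩ | hS
  · exact absurd hSA (hA.not_inRW_append_append_self hW)
  · by_contra hne
    exact (hA.mk_le_one_of_append_right hSA).not_gt (hA.1.one_lt_of_prefix hS hne)

theorem not_invRev_suffix_of_prefix (hA : IsMaxAscent W A) (hW : CyclicallyReduced W)
    (hB : InRW W B) (hpre : A <+: B) : ¬ FreeGroup.invRev A <:+ B := by
  rintro ⟨Z, rfl⟩
  suffices h : A <+: Z by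
    obtain ⟨E, rfl⟩ := h
    exact hA.not_inRW_append_append_invRev hW hB
  rcases List.prefix_or_prefix_of_prefix hpre (List.prefix_append Z _) with h | ⟨Y, hY⟩
  · exact h
  · have hYinv : Y <+: FreeGroup.invRev A := by
      rwa [← hY, List.prefix_append_right_inj, hY] at hpre
    have hYnil : Y = [] := hA.1.eq_nil_of_suffix_of_prefix_invRev ⟨Z, hY⟩ hYinv
    rw [← hY, hYnil, List.append_nil]

theorem not_prefix_of_isRotated_invRev (hA : IsMaxAscent W A) (hW : CyclicallyReduced W)
    (hU : InRW W U) (hUV : U ~r FreeGroup.invRev V) (hAU : A <+: U) : ¬ A <+: V := by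
  intro hAV
  have hsuf := invRev_suffix_of_prefix hAV
  obtain ⟨S, T, rfl, hTS⟩ := exists_append_of_isRotated hUV
  rw [hTS] at hsuf
  rcases le_total A.length S.length with hle | hle
  · exact hA.not_invRev_suffix_of_prefix hW (hU.of_infix List.infix_append_left)
      (List.prefix_of_prefix_length_le hAU (List.prefix_append S T) hle)
      (List.suffix_of_suffix_length_le hsuf (List.suffix_append T S)
        (by rwa [FreeGroup.invRev_length]))
  · obtain rfl : S = [] := hA.1.eq_nil_of_prefix_of_suffix_invRev
      (List.prefix_of_prefix_length_le (List.prefix_append S T) hAU hle)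
      (List.suffix_of_suffix_length_le (List.suffix_append T S) hsuf
        (by rwa [FreeGroup.invRev_length]))
    exact hA.not_invRev_suffix_of_prefix hW hU hAU (by simpa using hsuf)

theorem eq_nil_of_suffix_of_prefix (hA : IsMaxAscent W A) (hAC : InRW W (A ++ C))
    (hsuf : P <:+ A) (hpre : P <+: C) : P = [] := by
  by_contra hP
  have hAP : InRW W (A ++ P) :=
    hAC.of_infix ((List.prefix_append_right_inj A).2 hpre).isInfix
  exact (hA.mk_le_one_of_append_left hAP).not_gt (hA.1.one_lt_of_suffix hsuf hP)

theorem eq_nil_of_prefix_append_of_prefix (hA : IsMaxAscent W A) (hW : CyclicallyReduced W)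
    (hST : InRW W (S ++ T)) (hpre : A <+: S ++ T) (hT : A <+: T) : S = [] := by
  have hSA : S ++ A <+: S ++ T := (List.prefix_append_right_inj S).2 hT
  exact hA.eq_nil_of_prefix_append_self hW (hST.of_infix hSA.isInfix)
    (List.prefix_of_prefix_length_le hpre hSA (by simp))

theorem eq_of_isRotated (hA : IsMaxAscent W A) (hW : CyclicallyReduced W) (hU : InRW W U)
    (hV : InRW W V) (hUV : U ~r V) (hAU : A <+: U) (hAV : A <+: V) : U = V := by
  obtain ⟨S, T, rfl, rfl⟩ := exists_append_of_isRotated hUV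
  rcases le_total A.length T.length with hle | hTA
  · have hT := List.prefix_of_prefix_length_le hAV (List.prefix_append T S) hle
    simp [hA.eq_nil_of_prefix_append_of_prefix hW hU hAU hT]
  rcases le_total A.length S.length with hle | hSA
  · have hS := List.prefix_of_prefix_length_le hAU (List.prefix_append S T) hle
    simp [hA.eq_nil_of_prefix_append_of_prefix hW hV hAV hS]
  obtain ⟨Q, hQ⟩ := List.prefix_of_prefix_length_le (List.prefix_append S T) hAU hSA
  obtain ⟨Q', hQ'⟩ := List.prefix_of_prefix_length_le (List.prefix_append T S) hAV hTA
  obtain ⟨C, hC⟩ := hAU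
  obtain ⟨C', hC'⟩ := hAV
  have hT : T = Q ++ C := by simpa [← hQ, eq_comm] using hC
  have hS : S = Q' ++ C' := by simpa [← hQ', eq_comm] using hC'
  have hAeq : Q' ++ C' ++ Q = Q ++ C ++ Q' := by rw [← hS, ← hT, hQ, hQ']
  have hCC' : C' = C := middle_eq_of_append_swap hAeq
    (fun P hP => hA.eq_nil_of_suffix_of_prefix (hC' ▸ hV) (hP.trans ⟨S, hQ⟩))
    (fun P hP => hA.eq_nil_of_suffix_of_prefix (hC ▸ hU) (hP.trans ⟨T, hQ'⟩))
  rw [← hC, ← hC', hCC']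

end IsMaxAscent

end MaximalAscent

theorem max_ascent_uniquely_positioned_general [LinearOrder (FreeGroup X)]
    [MulLeftStrictMono (FreeGroup X)] [MulRightStrictMono (FreeGroup X)]
    (W A : List (X × Bool)) (hcr : CyclicallyReduced W) (hmax : IsMaxAscent W A) :
    ∃! W', (List.IsRotated W W' ∨ List.IsRotated (FreeGroup.invRev W) W') ∧ A <+: W' := by
  have := mulLeftMono_of_mulLeftStrictMono (FreeGroup X)
  have := mulRightMono_of_mulRightStrictMono (FreeGroup X)
  obtain ⟨W₀, hW₀, hAW₀⟩ := hmax.2.1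
  obtain ⟨U, hrot, hAU⟩ := exists_isRotated_prefix_of_infix hAW₀
  have hU := hW₀.imp (·.trans hrot) (·.trans hrot)
  refine ⟨U, ⟨hU, hAU⟩, fun V ⟨hV, hAV⟩ => ?_⟩
  have hUR : InRW W U := ⟨U, hU, List.infix_rfl⟩
  have hVR : InRW W V := ⟨V, hV, List.infix_rfl⟩
  rcases isRotated_or_isRotated_invRev hV hU with h | h
  · exact hmax.eq_of_isRotated hcr hVR hUR h hAV hAU
  · exact absurd hAU (hmax.not_prefix_of_isRotated_invRev hcr hVR h hAV)

/-- If `W` is a cyclically reduced nonperiodic word in a bi-ordered free group,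
then its maximal ascent `A` is uniquely positioned: `A` is a prefix of exactly one
cyclic permutation of `W` or `W⁻¹`. -/
theorem max_ascent_uniquely_positioned [LinearOrder (FreeGroup X)]
    [CovariantClass (FreeGroup X) (FreeGroup X) (· * ·) (· < ·)]
    [CovariantClass (FreeGroup X) (FreeGroup X) (Function.swap (· * ·)) (· < ·)]
    (W A : List (X × Bool)) (hcr : CyclicallyReduced W) (hnp : ¬ Periodic W)
    (hmax : IsMaxAscent W A) :
    ∃! W', (List.IsRotated W W' ∨ List.IsRotated (FreeGroup.invRev W) W') ∧ A <+: W' :=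
  max_ascent_uniquely_positioned_general W A hcr hmax
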